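/- arXiv:2604.24728 — 7 statements merged into one kernel-verified Lean document; each statement's English description precedes it below -/
import Mathlib

section
/- Let (X, p, θ) be a 0-complete partial extended b-metric space and let T : X → X satisfy p(Tx, Ty) ≤ k·p(x,y) for all x,y ∈ X, where k ∈ [0,1). Suppose that for each x₀ ∈ X, writing xₙ = Tⁿx₀, one has lim sup_{n,m→∞} θ(xₙ, xₘ) < 1/k (i.e., there is c with k·c < 1 such that θ(xₙ, xₘ) ≤ c for all sufficiently large n, m). Then T has exactly one fixed point u ∈ X, and moreover for each y ∈ X the iterates Tⁿy converge to u in the sense that lim_{n→∞} p(Tⁿy, u) = 0. -/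
open Filter Topology

/-!
If `θ a (T^[m] a) ≤ c` for all `m` and `d m = p a (T^[m] a)`, then the triangle inequality through
`T^[q] a` gives `d (q + m) ≤ c * (d q + k ^ q * d m)`. For `q` so large that `c * k ^ q < 1` this
recursion keeps `d` bounded, whatever the size of `c`. A bounded orbit of a contraction is
0-Cauchy, since `p (T^[n] a) (T^[n + m] a) ≤ k ^ n * d m`. Its limit `u` is also the limit of the
shifted orbit, which converges to `T u`, so `T u = u`.
-/

/-- A dislocated extended b-metric: the triangle inequality holds up to the factor `θ x z`, and
points at distance zero coincide, but self-distances may be positive. Partial extended b-metrics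
and extended b-metrics are both of this kind. -/
structure IsDislocatedExtendedBMetric {X : Type*} (p θ : X → X → ℝ) : Prop where
  nonneg : ∀ x y, 0 ≤ p x y
  eq_of_eq_zero : ∀ {x y}, p x y = 0 → x = y
  symm : ∀ x y, p x y = p y x
  triangle : ∀ x y z, p x z ≤ θ x z * (p x y + p y z)

/-- The notion of 0-Cauchy sequence: `p (s n) (s m)` tends to `0` as `n` and `m` tend to infinity
independently. -/
def IsZeroCauchy {X : Type*} (p : X → X → ℝ) (s : ℕ → X) : Prop :=
  Tendsto (fun nm : ℕ × ℕ => p (s nm.1) (s nm.2)) atTop (𝓝 0)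

/-- 0-completeness: every 0-Cauchy sequence converges to a point of self-distance zero. -/
def IsZeroComplete {X : Type*} (p : X → X → ℝ) : Prop :=
  ∀ s : ℕ → X, IsZeroCauchy p s → ∃ u : X, Tendsto (fun n => p (s n) u) atTop (𝓝 0) ∧ p u u = 0

lemma bddAbove_range_of_add_le_add_mul {d : ℕ → ℝ} {q : ℕ} {A r : ℝ} (hr0 : 0 ≤ r) (hr1 : r < 1)
    (hd : ∀ m, d (q + m) ≤ A + r * d m) : BddAbove (Set.range d) := by
  obtain ⟨M, hM⟩ := ((Set.finite_Iio q).image d).bddAbove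
  refine ⟨max M (A / (1 - r)), Set.forall_mem_range.2 fun n => ?_⟩
  -- Bound the largest of `d 0, …, d n`: if its index is at least `q`, the recursion bounds it
  -- in terms of itself.
  obtain ⟨i, hin, hmax⟩ := (Finset.range (n + 1)).exists_max_image d Finset.nonempty_range_add_one
  refine (hmax n (Finset.self_mem_range_succ n)).trans ?_
  rcases lt_or_ge i q with hiq | hqi
  · exact le_max_of_le_left (hM ⟨i, hiq, rfl⟩)
  · obtain ⟨j, rfl⟩ := Nat.exists_eq_add_of_le hqi
    have hj : d j ≤ d (q + j) := hmax j (by simp only [Finset.mem_range] at hin ⊢; lia)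
    have hself : d (q + j) ≤ A + r * d (q + j) := (hd j).trans (by gcongr)
    refine le_max_of_le_right ((le_div_iff₀ (sub_pos.2 hr1)).2 ?_)
    linarith

section Contraction

variable {X : Type*} {p : X → X → ℝ} {T : X → X} {k : ℝ}

lemma iterate_le_pow_mul (hk0 : 0 ≤ k) (hT : ∀ x y, p (T x) (T y) ≤ k * p x y) (n : ℕ) (x y : X) :
    p (T^[n] x) (T^[n] y) ≤ k ^ n * p x y := by
  induction n with
  | zero => simp
  | succ n ih =>
    rw [Function.iterate_succ_apply', Function.iterate_succ_apply', pow_succ', mul_assoc]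
    exact (hT _ _).trans (mul_le_mul_of_nonneg_left ih hk0)

lemma tendsto_pow_mul_zero (hk0 : 0 ≤ k) (hk1 : k < 1) (B : ℝ) :
    Tendsto (fun n : ℕ => k ^ n * B) atTop (𝓝 0) := by
  simpa only [zero_mul] using (tendsto_pow_atTop_nhds_zero_of_lt_one hk0 hk1).mul_const B

lemma tendsto_iterate_iterate_zero (hp : ∀ x y, 0 ≤ p x y) (hk0 : 0 ≤ k) (hk1 : k < 1)
    (hT : ∀ x y, p (T x) (T y) ≤ k * p x y) (x y : X) :
    Tendsto (fun n => p (T^[n] x) (T^[n] y)) atTop (𝓝 0) :=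
  squeeze_zero (fun _ => hp _ _) (fun n => iterate_le_pow_mul hk0 hT n x y)
    (tendsto_pow_mul_zero hk0 hk1 _)

lemma iterate_le_pow_min_mul (hsymm : ∀ x y, p x y = p y x) (hk0 : 0 ≤ k)
    (hT : ∀ x y, p (T x) (T y) ≤ k * p x y) {a : X} {B : ℝ} (hB : ∀ m, p a (T^[m] a) ≤ B)
    (n m : ℕ) : p (T^[n] a) (T^[m] a) ≤ k ^ min n m * B := by
  wlog hnm : n ≤ m generalizing n m
  · rw [hsymm, min_comm]
    exact this m n (le_of_not_ge hnm)
  obtain ⟨j, rfl⟩ := Nat.exists_eq_add_of_le hnm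
  rw [min_eq_left hnm, Function.iterate_add_apply]
  exact (iterate_le_pow_mul hk0 hT n a _).trans (by gcongr; exact hB j)

lemma isZeroCauchy_iterate_of_bddAbove (hp : ∀ x y, 0 ≤ p x y) (hsymm : ∀ x y, p x y = p y x)
    (hk0 : 0 ≤ k) (hk1 : k < 1) (hT : ∀ x y, p (T x) (T y) ≤ k * p x y) {a : X}
    (ha : BddAbove (Set.range fun m => p a (T^[m] a))) : IsZeroCauchy p fun n => T^[n] a := by
  obtain ⟨B, hB⟩ := ha
  have hmin : Tendsto (fun nm : ℕ × ℕ => min nm.1 nm.2) atTop atTop :=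
    tendsto_atTop.2 fun N => (eventually_ge_atTop (N, N)).mono fun _ h => le_min h.1 h.2
  exact squeeze_zero (fun _ => hp _ _)
    (fun nm => iterate_le_pow_min_mul hsymm hk0 hT (Set.forall_mem_range.1 hB) nm.1 nm.2)
    ((tendsto_pow_mul_zero hk0 hk1 B).comp hmin)

end Contraction

namespace IsDislocatedExtendedBMetric

variable {X : Type*} {p θ : X → X → ℝ}

lemma of_partial (hp_nonneg : ∀ x y, 0 ≤ p x y)
    (hP1 : ∀ x y, p x x = p x y ∧ p x y = p y y → x = y) (hP3 : ∀ x y, p x y = p y x)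
    (hP4 : ∀ x y z, p x z ≤ θ x z * (p x y + p y z) - p y y) :
    IsDislocatedExtendedBMetric p θ where
  nonneg := hp_nonneg
  eq_of_eq_zero {x y} hxy := by
    have hself : p x x + p y y ≤ 0 := by
      have := hP4 x y x
      rw [hP3 y x, hxy] at this
      linarith
    have hx := hp_nonneg x x
    have hy := hp_nonneg y y
    exact hP1 x y ⟨by linarith, by linarith⟩
  symm := hP3
  triangle x y z := (hP4 x y z).trans (sub_le_self _ (hp_nonneg y y))

lemma eq_of_tendsto (h : IsDislocatedExtendedBMetric p θ) {ι : Type*} {l : Filter ι}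
    [l.NeBot] {s : ι → X} {u v : X} (hu : Tendsto (fun i => p (s i) u) l (𝓝 0))
    (hv : Tendsto (fun i => p (s i) v) l (𝓝 0)) : u = v := by
  refine h.eq_of_eq_zero (le_antisymm ?_ (h.nonneg u v))
  have hsum : Tendsto (fun i => θ u v * (p (s i) u + p (s i) v)) l (𝓝 0) := by
    simpa only [add_zero, mul_zero] using (hu.add hv).const_mul (θ u v)
  exact ge_of_tendsto' hsum fun i => h.symm u (s i) ▸ h.triangle u (s i) v

variable {T : X → X} {k : ℝ}

lemma bddAbove_range_iterate (h : IsDislocatedExtendedBMetric p θ) (hk0 : 0 ≤ k) (hk1 : k < 1)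
    (hT : ∀ x y, p (T x) (T y) ≤ k * p x y) {a : X}
    (hθ : BddAbove (Set.range fun m => θ a (T^[m] a))) :
    BddAbove (Set.range fun m => p a (T^[m] a)) := by
  obtain ⟨c, hc0, hc⟩ := hθ.exists_ge 0
  obtain ⟨q, hq⟩ : ∃ q : ℕ, k ^ q * c < 1 :=
    ((tendsto_pow_mul_zero hk0 hk1 c).eventually_lt_const one_pos).exists
  refine bddAbove_range_of_add_le_add_mul (q := q) (A := c * p a (T^[q] a))
    (mul_nonneg (pow_nonneg hk0 q) hc0) hq fun m => ?_
  have hnonneg : 0 ≤ p a (T^[q] a) + p (T^[q] a) (T^[q + m] a) :=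
    add_nonneg (h.nonneg _ _) (h.nonneg _ _)
  calc p a (T^[q + m] a)
      ≤ θ a (T^[q + m] a) * (p a (T^[q] a) + p (T^[q] a) (T^[q + m] a)) := h.triangle _ _ _
    _ ≤ c * (p a (T^[q] a) + p (T^[q] a) (T^[q + m] a)) := by
      gcongr
      exact hc _ ⟨q + m, rfl⟩
    _ ≤ c * (p a (T^[q] a) + k ^ q * p a (T^[m] a)) := by
      rw [Function.iterate_add_apply]
      gcongr
      exact iterate_le_pow_mul hk0 hT q _ _
    _ = c * p a (T^[q] a) + k ^ q * c * p a (T^[m] a) := by ring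

lemma isFixedPt_of_tendsto_iterate (h : IsDislocatedExtendedBMetric p θ)
    (hT : ∀ x y, p (T x) (T y) ≤ k * p x y) {a u : X}
    (hu : Tendsto (fun n => p (T^[n] a) u) atTop (𝓝 0)) : Function.IsFixedPt T u := by
  have hTu : Tendsto (fun n => p (T^[n + 1] a) (T u)) atTop (𝓝 0) := by
    refine squeeze_zero (fun _ => h.nonneg _ _) (fun n => ?_)
      (by simpa only [mul_zero] using hu.const_mul k)
    rw [Function.iterate_succ_apply']
    exact hT _ _
  exact h.eq_of_tendsto hTu ((tendsto_add_atTop_iff_nat 1).2 hu)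

end IsDislocatedExtendedBMetric

theorem pebms_banach_fixed_point_general {X : Type*} {p θ : X → X → ℝ}
    (h : IsDislocatedExtendedBMetric p θ) (hcomp : IsZeroComplete p) {T : X → X} {k : ℝ}
    (hk0 : 0 ≤ k) (hk1 : k < 1) (hT : ∀ x y, p (T x) (T y) ≤ k * p x y) {a : X}
    (hθ : BddAbove (Set.range fun m => θ a (T^[m] a))) :
    ∃ u : X, T u = u ∧ (∀ v : X, T v = v → v = u) ∧
      ∀ y : X, Tendsto (fun n => p (T^[n] y) u) atTop (𝓝 0) := by
  have hbdd := h.bddAbove_range_iterate hk0 hk1 hT hθ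
  obtain ⟨u, hu, -⟩ := hcomp _ (isZeroCauchy_iterate_of_bddAbove h.nonneg h.symm hk0 hk1 hT hbdd)
  have hfix : T u = u := h.isFixedPt_of_tendsto_iterate hT hu
  have hlim : ∀ y, Tendsto (fun n => p (T^[n] y) u) atTop (𝓝 0) := fun y => by
    simpa only [Function.iterate_fixed hfix] using
      tendsto_iterate_iterate_zero h.nonneg hk0 hk1 hT y u
  refine ⟨u, hfix, fun v hv => h.eq_of_eq_zero ?_, hlim⟩
  simpa only [Function.iterate_fixed hv, tendsto_const_nhds_iff] using hlim v

/-- Banach-type fixed point theorem in a 0-complete partial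
extended b-metric space. -/
theorem pebms_banach_fixed_point
    {X : Type*} [Nonempty X]
    (p : X → X → ℝ) (θ : X → X → ℝ)
    (hθ : ∀ x y, 1 ≤ θ x y)
    (hp_nonneg : ∀ x y, 0 ≤ p x y)
    (hP1 : ∀ x y, (p x x = p x y ∧ p x y = p y y) ↔ x = y)
    (hP2 : ∀ x y, p x x ≤ p x y)
    (hP3 : ∀ x y, p x y = p y x)
    (hP4 : ∀ x y z, p x z ≤ θ x z * (p x y + p y z) - p y y)
    (hcomp : ∀ s : ℕ → X,
      Tendsto (fun nm : ℕ × ℕ => p (s nm.1) (s nm.2)) atTop (𝓝 0) →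
      ∃ u : X, Tendsto (fun n => p (s n) u) atTop (𝓝 0) ∧ p u u = 0)
    (T : X → X) (k : ℝ) (hk0 : 0 ≤ k) (hk1 : k < 1)
    (hT : ∀ x y, p (T x) (T y) ≤ k * p x y)
    (hθlim : ∀ x₀ : X, ∃ c : ℝ, k * c < 1 ∧
      ∃ N : ℕ, ∀ n ≥ N, ∀ m ≥ N, θ (T^[n] x₀) (T^[m] x₀) ≤ c) :
    ∃ u : X, T u = u ∧ (∀ v : X, T v = v → v = u) ∧
      ∀ y : X, Tendsto (fun n => p (T^[n] y) u) atTop (𝓝 0) := by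
  obtain ⟨x₀⟩ := ‹Nonempty X›
  obtain ⟨c, -, N, hN⟩ := hθlim x₀
  have hbdd : ∀ m, θ (T^[N] x₀) (T^[m] (T^[N] x₀)) ≤ c := fun m => by
    rw [← Function.iterate_add_apply]
    exact hN N le_rfl (m + N) (Nat.le_add_left N m)
  exact pebms_banach_fixed_point_general (.of_partial hp_nonneg (fun x y => (hP1 x y).1) hP3 hP4)
    hcomp hk0 hk1 hT ⟨c, Set.forall_mem_range.2 hbdd⟩
end

section
/- Let (X, p, θ) be a 0-complete partial extended b-metric space and let T : X → X satisfy the Kannan-type condition p(Tx, Ty) ≤ k[p(x, Tx) + p(y, Ty)] for all x,y ∈ X, where k ∈ [0, 1/2), together with θ(Tx, x) < 1/k for all x ∈ X. Then T has a unique fixed point u ∈ X; moreover p(u,u) = 0 and for every x₀ ∈ X, lim_{n→∞} p(Tⁿx₀, u) = 0. -/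
open Filter Topology

/-!
Feeding the pair `(x, T x)` to the Kannan condition shows that the displacement `p x (T x)`
contracts by the factor `k / (1 - k) < 1` along every orbit. The condition then bounds the distance
between any two orbits by their displacements, so any two orbits approach each other: each one is
0-Cauchy, each converges to any fixed point, and two fixed points are at distance zero. If `u` is
the limit of an orbit, the triangle inequality through the orbit gives
`p (T u) u ≤ θ (T u) u * (k * p (T u) u)` in the limit, which forces `p (T u) u = 0`.
-/

open Function

theorem eq_of_partial_dist_eq_zero {X : Type*} {p : X → X → ℝ} (hp : ∀ x y, 0 ≤ p x y)
    (hsep : ∀ x y, p x x = p x y ∧ p x y = p y y → x = y) (hself : ∀ x y, p x x ≤ p x y)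
    (hsymm : ∀ x y, p x y = p y x) {x y : X} (hxy : p x y = 0) : x = y := by
  have hx : p x x = 0 := ((hself x y).trans_eq hxy).antisymm (hp x x)
  have hy : p y y = 0 := ((hself y x).trans_eq ((hsymm y x).trans hxy)).antisymm (hp y y)
  exact hsep x y ⟨hx.trans hxy.symm, hxy.trans hy.symm⟩

/-- `T` is a Kannan map with constant `k` for the distance function `p`. No axioms are imposed
on `p`, so that metrics, partial metrics and their `b`-metric variants are all covered. -/
def IsKannanMap {X : Type*} (p : X → X → ℝ) (k : ℝ) (T : X → X) : Prop :=
  ∀ x y, p (T x) (T y) ≤ k * (p x (T x) + p y (T y))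

namespace IsKannanMap

variable {X : Type*} {p : X → X → ℝ} {k : ℝ} {T : X → X}

theorem displacement_map_le (hT : IsKannanMap p k T) (hk : k < 1) (x : X) :
    p (T x) (T (T x)) ≤ k / (1 - k) * p x (T x) := by
  rw [div_mul_eq_mul_div, le_div_iff₀ (sub_pos.2 hk)]
  linarith [hT x (T x)]

theorem displacement_iterate_le (hT : IsKannanMap p k T) (hk₀ : 0 ≤ k) (hk : k < 1)
    (x : X) (n : ℕ) :
    p (T^[n] x) (T (T^[n] x)) ≤ (k / (1 - k)) ^ n * p x (T x) := by
  refine le_geom (u := fun n ↦ p (T^[n] x) (T (T^[n] x)))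
    (div_nonneg hk₀ (sub_nonneg.2 hk.le)) n fun m _ ↦ ?_
  simpa only [iterate_succ_apply'] using hT.displacement_map_le hk (T^[m] x)

theorem tendsto_displacement_iterate (hT : IsKannanMap p k T) (hp : ∀ x y, 0 ≤ p x y)
    (hk₀ : 0 ≤ k) (hk : k < 1 / 2) (x : X) :
    Tendsto (fun n ↦ p (T^[n] x) (T (T^[n] x))) atTop (𝓝 0) := by
  have hk₁ : 0 < 1 - k := by linarith
  have hratio : k / (1 - k) < 1 := by rw [div_lt_one hk₁]; linarith
  refine squeeze_zero (fun _ ↦ hp _ _) (hT.displacement_iterate_le hk₀ (sub_pos.1 hk₁) x) ?_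
  simpa only [zero_mul] using
    (tendsto_pow_atTop_nhds_zero_of_lt_one (div_nonneg hk₀ hk₁.le) hratio).mul_const (p x (T x))

theorem tendsto_iterate_iterate (hT : IsKannanMap p k T) (hp : ∀ x y, 0 ≤ p x y)
    (hk₀ : 0 ≤ k) (hk : k < 1 / 2) (x y : X) :
    Tendsto (fun nm : ℕ × ℕ ↦ p (T^[nm.1] x) (T^[nm.2] y)) atTop (𝓝 0) := by
  have hdisp (z : X) : Tendsto (fun n ↦ p (T^[n - 1] z) (T (T^[n - 1] z))) atTop (𝓝 0) :=
    (hT.tendsto_displacement_iterate hp hk₀ hk z).comp (tendsto_sub_atTop_nat 1)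
  have hbound : Tendsto (fun nm : ℕ × ℕ ↦ k * (p (T^[nm.1 - 1] x) (T (T^[nm.1 - 1] x)) +
      p (T^[nm.2 - 1] y) (T (T^[nm.2 - 1] y)))) atTop (𝓝 0) := by
    rw [← prod_atTop_atTop_eq]
    simpa only [comp_def, add_zero, mul_zero] using
      (((hdisp x).comp tendsto_fst).add ((hdisp y).comp tendsto_snd)).const_mul k
  refine squeeze_zero' (.of_forall fun _ ↦ hp _ _) ?_ hbound
  filter_upwards [eventually_ge_atTop (1, 1)] with ⟨n, m⟩ ⟨hn, hm⟩
  obtain ⟨n, rfl⟩ := Nat.exists_eq_add_of_le' hn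
  obtain ⟨m, rfl⟩ := Nat.exists_eq_add_of_le' hm
  simpa only [iterate_succ_apply', Nat.add_sub_cancel] using hT (T^[n] x) (T^[m] y)

theorem tendsto_iterate_of_isFixedPt (hT : IsKannanMap p k T) (hp : ∀ x y, 0 ≤ p x y)
    (hk₀ : 0 ≤ k) (hk : k < 1 / 2) {u : X} (hu : IsFixedPt T u) (x : X) :
    Tendsto (fun n ↦ p (T^[n] x) u) atTop (𝓝 0) := by
  simpa only [comp_def, (hu.iterate _).eq] using
    (hT.tendsto_iterate_iterate hp hk₀ hk x u).comp tendsto_atTop_diagonal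

theorem eq_zero_of_isFixedPt (hT : IsKannanMap p k T) (hp : ∀ x y, 0 ≤ p x y)
    (hk₀ : 0 ≤ k) (hk : k < 1 / 2) {u v : X} (hu : IsFixedPt T u) (hv : IsFixedPt T v) :
    p u v = 0 := by
  have hlim := hT.tendsto_iterate_of_isFixedPt hp hk₀ hk hv u
  simp only [(hu.iterate _).eq] at hlim
  exact tendsto_nhds_unique tendsto_const_nhds hlim

theorem map_self_eq_zero_of_tendsto (hT : IsKannanMap p k T) (hp : ∀ x y, 0 ≤ p x y)
    (hsymm : ∀ x y, p x y = p y x) {u : X} {c : ℝ}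
    (htri : ∀ y, p (T u) u ≤ c * (p (T u) y + p y u)) (hc : k * c < 1)
    {ι : Type*} {l : Filter ι} [l.NeBot] {y : ι → X}
    (hdisp : Tendsto (fun i ↦ p (y i) (T (y i))) l (𝓝 0))
    (hlim : Tendsto (fun i ↦ p (T (y i)) u) l (𝓝 0)) : p (T u) u = 0 := by
  by_contra hne
  have hpos : 0 < p (T u) u := (hp _ _).lt_of_ne' hne
  have hc₀ : 0 ≤ c :=
    (pos_of_mul_pos_left (hpos.trans_le (htri u)) (add_nonneg (hp _ _) (hp _ _))).le
  have hbound (i : ι) :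
      p (T u) u ≤ c * (k * (p (T u) u + p (y i) (T (y i))) + p (T (y i)) u) :=
    calc p (T u) u ≤ c * (p (T u) (T (y i)) + p (T (y i)) u) := htri _
      _ ≤ c * (k * (p (T u) u + p (y i) (T (y i))) + p (T (y i)) u) := by
        gcongr
        exact hsymm (T u) u ▸ hT u (y i)
  have hle : p (T u) u ≤ c * (k * (p (T u) u + 0) + 0) :=
    ge_of_tendsto' ((((hdisp.const_add _).const_mul k).add hlim).const_mul c) hbound
  have hlt : k * c * p (T u) u < 1 * p (T u) u := mul_lt_mul_of_pos_right hc hpos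
  linarith

end IsKannanMap

theorem pebms_kannan_fixed_point_general {X : Type*} [Nonempty X] {p θ : X → X → ℝ}
    (hp : ∀ x y, 0 ≤ p x y) (heq : ∀ x y, p x y = 0 → x = y) (hsymm : ∀ x y, p x y = p y x)
    (htri : ∀ x y z, p x z ≤ θ x z * (p x y + p y z))
    (hcomp : ∀ s : ℕ → X,
      Tendsto (fun nm : ℕ × ℕ ↦ p (s nm.1) (s nm.2)) atTop (𝓝 0) →
      ∃ u : X, Tendsto (fun n ↦ p (s n) u) atTop (𝓝 0))
    {T : X → X} {k : ℝ} (hk₀ : 0 ≤ k) (hk : k < 1 / 2) (hT : IsKannanMap p k T)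
    (hθT : ∀ x, k * θ (T x) x < 1) :
    ∃ u : X, T u = u ∧ p u u = 0 ∧ (∀ v : X, T v = v → v = u) ∧
      ∀ x₀ : X, Tendsto (fun n ↦ p (T^[n] x₀) u) atTop (𝓝 0) := by
  obtain ⟨a⟩ := ‹Nonempty X›
  obtain ⟨u, hlim⟩ := hcomp (T^[·] a) (hT.tendsto_iterate_iterate hp hk₀ hk a a)
  have hlim_succ : Tendsto (fun n ↦ p (T (T^[n] a)) u) atTop (𝓝 0) := by
    simpa only [comp_def, iterate_succ_apply'] using hlim.comp (tendsto_add_atTop_nat 1)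
  have hu : IsFixedPt T u := heq _ _ <|
    hT.map_self_eq_zero_of_tendsto hp hsymm (fun y ↦ htri (T u) y u) (hθT u)
      (hT.tendsto_displacement_iterate hp hk₀ hk a) hlim_succ
  exact ⟨u, hu, hT.eq_zero_of_isFixedPt hp hk₀ hk hu hu,
    fun v hv ↦ heq v u (hT.eq_zero_of_isFixedPt hp hk₀ hk hv hu),
    hT.tendsto_iterate_of_isFixedPt hp hk₀ hk hu⟩

/-- Kannan-type fixed point theorem in a 0-complete partial
extended b-metric space.  The condition `θ(Tx,x) < 1/k` is rendered as
`k * θ(Tx,x) < 1` (equivalent for `k > 0`, and correct for `k = 0` where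
`1/k = ∞`). -/
theorem pebms_kannan_fixed_point
    {X : Type*} [Nonempty X]
    (p : X → X → ℝ) (θ : X → X → ℝ)
    (hθ : ∀ x y, 1 ≤ θ x y)
    (hp_nonneg : ∀ x y, 0 ≤ p x y)
    (hP1 : ∀ x y, (p x x = p x y ∧ p x y = p y y) ↔ x = y)
    (hP2 : ∀ x y, p x x ≤ p x y)
    (hP3 : ∀ x y, p x y = p y x)
    (hP4 : ∀ x y z, p x z ≤ θ x z * (p x y + p y z) - p y y)
    (hcomp : ∀ s : ℕ → X,
      Tendsto (fun nm : ℕ × ℕ => p (s nm.1) (s nm.2)) atTop (𝓝 0) →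
      ∃ u : X, Tendsto (fun n => p (s n) u) atTop (𝓝 0) ∧ p u u = 0)
    (T : X → X) (k : ℝ) (hk0 : 0 ≤ k) (hk1 : k < 1/2)
    (hT : ∀ x y, p (T x) (T y) ≤ k * (p x (T x) + p y (T y)))
    (hθT : ∀ x : X, k * θ (T x) x < 1) :
    ∃ u : X, T u = u ∧ p u u = 0 ∧ (∀ v : X, T v = v → v = u) ∧
      ∀ x₀ : X, Tendsto (fun n => p (T^[n] x₀) u) atTop (𝓝 0) :=
  pebms_kannan_fixed_point_general hp_nonneg
    (fun _ _ ↦ eq_of_partial_dist_eq_zero hp_nonneg (fun x y ↦ (hP1 x y).1) hP2 hP3) hP3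
    (fun x y z ↦ (hP4 x y z).trans (sub_le_self _ (hp_nonneg y y)))
    (fun s hs ↦ (hcomp s hs).imp fun _ ↦ And.left) hk0 hk1 hT hθT
end

section
/- Let (X, p, θ) be a partial extended b-metric space and let T : X → X satisfy the Kannan-type condition p(Tx, Ty) ≤ k[p(x, Tx) + p(y, Ty)] for all x,y ∈ X with k ∈ [0, 1/2). Then for any x₀ ∈ X the orbit xₙ = Tⁿx₀ is a 0-Cauchy sequence, i.e. lim_{n,m→∞} p(xₙ, xₘ) = 0. -/
open Filter Topology

/-! Write `x n` for the orbit and `d n = p (x n) (x (n + 1))` for its steps. The Kannan condition at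
two consecutive orbit points gives `d (n + 1) ≤ k * (d n + d (n + 1))`, so the steps decay with
ratio `k / (1 - k) < 1`. At two arbitrary orbit points the condition bounds
`p (x (n + 1)) (x (m + 1))` by `k * (d n + d m)`, which therefore tends to `0`. -/

theorem summable_of_succ_le_mul_add_succ {d : ℕ → ℝ} {k : ℝ} (hd : ∀ n, 0 ≤ d n) (hk : k < 1 / 2)
    (h : ∀ n, d (n + 1) ≤ k * (d n + d (n + 1))) : Summable d := by
  have hpos : 0 < 1 - k := by linarith
  have hratio : k / (1 - k) < 1 := by rw [div_lt_one hpos]; linarith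
  have hdecay (n : ℕ) : d (n + 1) ≤ k / (1 - k) * d n := by
    rw [div_mul_eq_mul_div, le_div_iff₀ hpos]
    linarith [h n]
  refine summable_of_ratio_norm_eventually_le hratio (.of_forall fun n ↦ ?_)
  simpa only [Real.norm_of_nonneg (hd _)] using hdecay n

theorem tendsto_add_prod_atTop_iff_nat {α : Type*} {f : ℕ × ℕ → α} {l : Filter α} (a b : ℕ) :
    Tendsto (fun nm : ℕ × ℕ ↦ f (nm.1 + a, nm.2 + b)) atTop l ↔ Tendsto f atTop l := by
  have hmap : map (Prod.map (· + a) (· + b)) (atTop : Filter (ℕ × ℕ)) = atTop := by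
    simp only [← prod_atTop_atTop_eq, ← prod_map_map_eq', map_add_atTop_eq_nat]
  conv_rhs => rw [← hmap, tendsto_map'_iff]
  rfl

/-- Kannan's contraction condition with constant `k`, for an arbitrary real-valued function `p` in
place of a metric and with no restriction on `k`. -/
def IsKannan {X : Type*} (p : X → X → ℝ) (k : ℝ) (T : X → X) : Prop :=
  ∀ x y, p (T x) (T y) ≤ k * (p x (T x) + p y (T y))

namespace IsKannan

variable {X : Type*} {p : X → X → ℝ} {k : ℝ} {T : X → X}

theorem iterate_succ_le (hT : IsKannan p k T) (x : X) (n m : ℕ) :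
    p (T^[n + 1] x) (T^[m + 1] x) ≤
      k * (p (T^[n] x) (T^[n + 1] x) + p (T^[m] x) (T^[m + 1] x)) := by
  simpa only [Function.iterate_succ_apply'] using hT (T^[n] x) (T^[m] x)

theorem summable_iterate_succ (hT : IsKannan p k T) (hp : ∀ x y, 0 ≤ p x y) (hk : k < 1 / 2)
    (x : X) : Summable fun n ↦ p (T^[n] x) (T^[n + 1] x) :=
  summable_of_succ_le_mul_add_succ (fun _ ↦ hp _ _) hk fun n ↦ hT.iterate_succ_le x n (n + 1)

end IsKannan

theorem pebms_kannan_orbit_zero_cauchy_general {X : Type*} {p : X → X → ℝ} {T : X → X} {k : ℝ}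
    (hp : ∀ x y, 0 ≤ p x y) (hk : k < 1 / 2) (hT : IsKannan p k T) (x₀ : X) :
    Tendsto (fun nm : ℕ × ℕ ↦ p (T^[nm.1] x₀) (T^[nm.2] x₀)) atTop (𝓝 0) := by
  set d : ℕ → ℝ := fun n ↦ p (T^[n] x₀) (T^[n + 1] x₀)
  have hd : Tendsto d atTop (𝓝 0) := (hT.summable_iterate_succ hp hk x₀).tendsto_atTop_zero
  have hbound : Tendsto (fun nm : ℕ × ℕ ↦ k * (d nm.1 + d nm.2)) atTop (𝓝 0) := by
    rw [← prod_atTop_atTop_eq]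
    simpa using ((hd.comp tendsto_fst).add (hd.comp tendsto_snd)).const_mul k
  exact (tendsto_add_prod_atTop_iff_nat 1 1).mp <|
    squeeze_zero (fun _ ↦ hp _ _) (fun nm ↦ hT.iterate_succ_le x₀ nm.1 nm.2) hbound

/-- In a partial extended b-metric space, the orbit of a
Kannan-type contraction is a 0-Cauchy sequence. -/
theorem pebms_kannan_orbit_zero_cauchy
    {X : Type*}
    (p : X → X → ℝ) (θ : X → X → ℝ)
    (hθ : ∀ x y, 1 ≤ θ x y)
    (hp_nonneg : ∀ x y, 0 ≤ p x y)
    (hP1 : ∀ x y, (p x x = p x y ∧ p x y = p y y) ↔ x = y)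
    (hP2 : ∀ x y, p x x ≤ p x y)
    (hP3 : ∀ x y, p x y = p y x)
    (hP4 : ∀ x y z, p x z ≤ θ x z * (p x y + p y z) - p y y)
    (T : X → X) (k : ℝ) (hk0 : 0 ≤ k) (hk1 : k < 1/2)
    (hT : ∀ x y, p (T x) (T y) ≤ k * (p x (T x) + p y (T y)))
    (x₀ : X) :
    Tendsto (fun nm : ℕ × ℕ => p (T^[nm.1] x₀) (T^[nm.2] x₀)) atTop (𝓝 0) :=
  pebms_kannan_orbit_zero_cauchy_general hp_nonneg hk1 hT x₀
end

section
/- Let (X, p, θ) be a partial extended b-metric space and let T : X → X satisfy p(Tx, Ty) ≤ k[p(x, Ty) + p(y, Ty)] for all x,y ∈ X with k ∈ [0, 1/2). For any x₀ ∈ X, writing xₙ = Tⁿx₀, the following inequality holds for all m, n ∈ ℕ with n ≥ 1: p(xₙ₊ₘ, xₙ) ≤ kᵐ · p(xₙ, xₙ) + ((1 − kᵐ⁺¹)/(1 − k)) · p(xₙ, xₙ₋₁). -/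
open Filter Topology

/-!
Fix `y` and put `u m = p (T^[m] (T y)) (T y)` and `a = p y (T y)`. Taking the second argument of the
contraction condition to be `y` gives the affine recurrence `u (m + 1) ≤ k * u m + k * a`, and
unrolling it produces a geometric sum.
-/

theorem le_pow_mul_add_geom_sum_mul {R : Type*} [CommSemiring R] [PartialOrder R] [IsOrderedRing R]
    {u : ℕ → R} {k b : R} (hk : 0 ≤ k) (hu : ∀ m, u (m + 1) ≤ k * u m + b) (m : ℕ) :
    u m ≤ k ^ m * u 0 + (∑ i ∈ Finset.range m, k ^ i) * b := by
  have gronwall :=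
    discrete_gronwall_prod_general (n₀ := 0) (fun n _ ↦ hu n) (fun _ _ ↦ hk) m.zero_le
  simp only [Nat.Ico_zero_eq_range, Finset.prod_const, Finset.card_range, Nat.card_Ico,
    ← Finset.mul_sum] at gronwall
  have reflect : ∑ i ∈ Finset.range m, k ^ (m - (i + 1)) = ∑ i ∈ Finset.range m, k ^ i := by
    simpa only [Nat.sub_sub, add_comm 1] using Finset.sum_range_reflect (k ^ ·) m
  rwa [reflect, mul_comm (u 0), mul_comm b] at gronwall

theorem iterate_apply_le_geom_sum {X R : Type*} [CommSemiring R] [PartialOrder R] [IsOrderedRing R]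
    {p : X → X → R} {T : X → X} {k : R} {y : X} (hk : 0 ≤ k)
    (hT : ∀ x, p (T x) (T y) ≤ k * (p x (T y) + p y (T y))) (m : ℕ) :
    p (T^[m] (T y)) (T y) ≤
      k ^ m * p (T y) (T y) + (∑ i ∈ Finset.range m, k ^ i) * (k * p y (T y)) := by
  refine le_pow_mul_add_geom_sum_mul (u := fun m ↦ p (T^[m] (T y)) (T y)) hk (fun m ↦ ?_) m
  simpa only [Function.iterate_succ_apply', mul_add] using hT (T^[m] (T y))

theorem pebms_modified_kannan_orbit_estimate_general
    {X R : Type*} [Field R] [LinearOrder R] [IsStrictOrderedRing R]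
    {p : X → X → R} (hp_nonneg : ∀ x y, 0 ≤ p x y)
    {T : X → X} {k : R} (hk0 : 0 ≤ k) (hk1 : k ≠ 1)
    (hT : ∀ x y, p (T x) (T y) ≤ k * (p x (T y) + p y (T y)))
    (x₀ : X) (m n : ℕ) (hn : 1 ≤ n) :
    p (T^[n + m] x₀) (T^[n] x₀) ≤
      k ^ m * p (T^[n] x₀) (T^[n] x₀) +
        (1 - k ^ (m + 1)) / (1 - k) * p (T^[n - 1] x₀) (T^[n] x₀) := by
  obtain ⟨n, rfl⟩ := Nat.exists_eq_add_of_le' hn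
  rw [Nat.add_sub_cancel, add_comm (n + 1) m, Function.iterate_add_apply,
    Function.iterate_succ_apply']
  set y := T^[n] x₀
  calc p (T^[m] (T y)) (T y)
      ≤ k ^ m * p (T y) (T y) + (∑ i ∈ Finset.range m, k ^ i) * (k * p y (T y)) :=
        iterate_apply_le_geom_sum hk0 (fun x ↦ hT x y) m
    _ ≤ k ^ m * p (T y) (T y) + (∑ i ∈ Finset.range (m + 1), k ^ i) * p y (T y) := by
        rw [geom_sum_succ]
        linarith [hp_nonneg y (T y)]
    _ = k ^ m * p (T y) (T y) + (1 - k ^ (m + 1)) / (1 - k) * p y (T y) := by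
        rw [geom_sum_eq hk1, ← neg_div_neg_eq, neg_sub, neg_sub]

/-- In a partial extended b-metric space, for a map satisfying
`p(Tx,Ty) ≤ k[p(x,Ty) + p(y,Ty)]`, one has the orbit estimate
`p(x_{n+m}, x_n) ≤ kᵐ p(x_n,x_n) + ((1-k^{m+1})/(1-k)) p(x_n, x_{n-1})`
for all `m` and all `n ≥ 1`. -/
theorem pebms_modified_kannan_orbit_estimate
    {X : Type*}
    (p : X → X → ℝ) (θ : X → X → ℝ)
    (hθ : ∀ x y, 1 ≤ θ x y)
    (hp_nonneg : ∀ x y, 0 ≤ p x y)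
    (hP1 : ∀ x y, (p x x = p x y ∧ p x y = p y y) ↔ x = y)
    (hP2 : ∀ x y, p x x ≤ p x y)
    (hP3 : ∀ x y, p x y = p y x)
    (hP4 : ∀ x y z, p x z ≤ θ x z * (p x y + p y z) - p y y)
    (T : X → X) (k : ℝ) (hk0 : 0 ≤ k) (hk1 : k < 1/2)
    (hT : ∀ x y, p (T x) (T y) ≤ k * (p x (T y) + p y (T y)))
    (x₀ : X) :
    ∀ m n : ℕ, 1 ≤ n →
      p (T^[n+m] x₀) (T^[n] x₀) ≤
        k^m * p (T^[n] x₀) (T^[n] x₀) +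
          ((1 - k^(m+1)) / (1 - k)) * p (T^[n] x₀) (T^[n-1] x₀) := by
  intro m n hn
  simpa only [hP3 (T^[n] x₀) (T^[n - 1] x₀)] using
    pebms_modified_kannan_orbit_estimate_general hp_nonneg hk0 (by linarith) hT x₀ m n hn
end

section
/- Let (X, p, θ) be a partial extended b-metric space and let T : X → X satisfy p(Tx, Ty) ≤ k[p(x, Ty) + p(y, Ty)] for all x,y ∈ X with k ∈ [0, 1/2). For any x₀ ∈ X, writing xₙ = Tⁿx₀, the following inequality holds for all n ∈ ℕ: p(xₙ₊₁, xₙ) ≤ kⁿ · p(x₁, x₀) + k · Σ_{t=1}^{n} k^{n−t} · p(x_t, x_t). -/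
open Filter Topology

/-! The self-distance `p (T x) (T x)` in the contraction inequality for the pair `(T x, x)` is the
inhomogeneous term of a linear recurrence with coefficient `k` for the successive distances along
the orbit; the estimate is the solution of that recurrence. -/

theorem le_pow_mul_add_sum_of_succ_le_mul_add {R : Type*} [CommSemiring R] [PartialOrder R]
    [IsOrderedRing R] {u b : ℕ → R} {k : R} (hk : 0 ≤ k)
    (hu : ∀ n, u (n + 1) ≤ k * u n + b (n + 1)) (n : ℕ) :
    u n ≤ k ^ n * u 0 + ∑ t ∈ Finset.Icc 1 n, k ^ (n - t) * b t := by
  have hgronwall : u n ≤ u 0 * k ^ n + ∑ t ∈ Finset.range n, b (t + 1) * k ^ (n - (t + 1)) := by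
    simpa using discrete_gronwall_prod_general (c := fun _ ↦ k) (b := fun m ↦ b (m + 1))
      (fun m _ ↦ hu m) (fun _ _ ↦ hk) n.zero_le
  have hshift : ∑ t ∈ Finset.range n, b (t + 1) * k ^ (n - (t + 1)) =
      ∑ t ∈ Finset.Icc 1 n, k ^ (n - t) * b t := by
    rw [Finset.range_eq_Ico, Finset.sum_Ico_add' (fun t ↦ b t * k ^ (n - t)), zero_add,
      Finset.Ico_add_one_right_eq_Icc]
    simp only [mul_comm]
  rwa [mul_comm (u 0), hshift] at hgronwall

theorem modified_kannan_apply_apply_le {R X : Type*} [NonUnitalNonAssocSemiring R] [LE R]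
    {p : X → X → R} {T : X → X} {k : R} (hp_symm : ∀ x y, p x y = p y x)
    (hT : ∀ x y, p (T x) (T y) ≤ k * (p x (T y) + p y (T y))) (x : X) :
    p (T (T x)) (T x) ≤ k * p (T x) x + k * p (T x) (T x) :=
  calc p (T (T x)) (T x)
    _ ≤ k * (p (T x) (T x) + p x (T x)) := hT (T x) x
    _ = k * p (T x) x + k * p (T x) (T x) := by rw [hp_symm x (T x), mul_add, add_comm]

theorem pebms_modified_kannan_successive_estimate_general {R X : Type*} [CommSemiring R]
    [PartialOrder R] [IsOrderedRing R] {p : X → X → R} {T : X → X} {k : R}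
    (hp_symm : ∀ x y, p x y = p y x) (hk : 0 ≤ k)
    (hT : ∀ x y, p (T x) (T y) ≤ k * (p x (T y) + p y (T y))) (x₀ : X) (n : ℕ) :
    p (T^[n + 1] x₀) (T^[n] x₀) ≤ k ^ n * p (T x₀) x₀ +
      k * ∑ t ∈ Finset.Icc 1 n, k ^ (n - t) * p (T^[t] x₀) (T^[t] x₀) := by
  have hstep (m : ℕ) : p (T^[m + 2] x₀) (T^[m + 1] x₀) ≤
      k * p (T^[m + 1] x₀) (T^[m] x₀) + k * p (T^[m + 1] x₀) (T^[m + 1] x₀) := by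
    simpa only [← Function.iterate_succ_apply'] using
      modified_kannan_apply_apply_le hp_symm hT (T^[m] x₀)
  simpa only [Finset.mul_sum, mul_left_comm, zero_add, Function.iterate_one,
    Function.iterate_zero_apply] using
    le_pow_mul_add_sum_of_succ_le_mul_add (u := fun m ↦ p (T^[m + 1] x₀) (T^[m] x₀))
      (b := fun t ↦ k * p (T^[t] x₀) (T^[t] x₀)) hk hstep n

/-- In a partial extended b-metric space, for a map satisfying
`p(Tx,Ty) ≤ k[p(x,Ty) + p(y,Ty)]`, one has
`p(x_{n+1}, x_n) ≤ kⁿ p(x₁,x₀) + k Σ_{t=1}^{n} k^{n-t} p(x_t, x_t)`. -/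
theorem pebms_modified_kannan_successive_estimate
    {X : Type*}
    (p : X → X → ℝ) (θ : X → X → ℝ)
    (hθ : ∀ x y, 1 ≤ θ x y)
    (hp_nonneg : ∀ x y, 0 ≤ p x y)
    (hP1 : ∀ x y, (p x x = p x y ∧ p x y = p y y) ↔ x = y)
    (hP2 : ∀ x y, p x x ≤ p x y)
    (hP3 : ∀ x y, p x y = p y x)
    (hP4 : ∀ x y z, p x z ≤ θ x z * (p x y + p y z) - p y y)
    (T : X → X) (k : ℝ) (hk0 : 0 ≤ k) (hk1 : k < 1/2)
    (hT : ∀ x y, p (T x) (T y) ≤ k * (p x (T y) + p y (T y)))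
    (x₀ : X) :
    ∀ n : ℕ, p (T^[n+1] x₀) (T^[n] x₀) ≤
      k^n * p (T^[1] x₀) x₀ +
        k * ∑ t ∈ Finset.Icc 1 n, k^(n-t) * p (T^[t] x₀) (T^[t] x₀) :=
  pebms_modified_kannan_successive_estimate_general hP3 hk0 hT x₀
end

section
/- Let (X, p, θ) be a partial extended b-metric space and let T : X → X satisfy p(Tx, Ty) ≤ k[p(x, Ty) + p(y, Ty)] for all x,y ∈ X with k ∈ [0, 1/2). If there exists x₀ ∈ X such that lim_{n→∞} n·p(Tⁿx₀, Tⁿx₀) = 0, then the orbit xₙ = Tⁿx₀ is a 0-Cauchy sequence, i.e. lim_{n,m→∞} p(xₙ, xₘ) = 0. -/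
open Filter Topology

/-
For fixed `y`, the sequence `a m = p (T^[m] x) (T y)` satisfies `a (m + 1) ≤ k * (a m + p y (T y))`,
so `a m` is at most `p y (T y)` plus the geometric error `k ^ m * a 0`. Taking for `y` the points of
an orbit, it remains to see that consecutive distances decay and that `a 0` stays bounded. Swapping
the arguments of `p` gives both: consecutive distances shrink by the factor `2 * k`, and the bound
on `p (T^[m] (T x)) (T x)` bounds the distances from `T x` to the rest of the orbit.
The estimates start at `T x` because nothing controls `p x (T^[n] x)` when `x` is not in the range
of `T`.
-/

/-- The modified Kannan contraction condition with constant `k`. In contrast to Kannan's condition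
`p (T x) (T y) ≤ k * (p x (T x) + p y (T y))`, both terms on the right are measured to `T y`.
The range of `k` is left to the individual results. -/
def ModifiedKannanWith {X : Type*} (k : ℝ) (p : X → X → ℝ) (T : X → X) : Prop :=
  ∀ x y, p (T x) (T y) ≤ k * (p x (T y) + p y (T y))

namespace ModifiedKannanWith

variable {X : Type*} {k : ℝ} {p : X → X → ℝ} {T : X → X}

theorem apply_self_le (hT : ModifiedKannanWith k p T) (x : X) :
    p (T x) (T x) ≤ 2 * k * p x (T x) :=
  (hT x x).trans_eq (by ring)

theorem iterate_apply_le (hT : ModifiedKannanWith k p T) (hp_nonneg : ∀ x y, 0 ≤ p x y)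
    (hk0 : 0 ≤ k) (hk : k ≤ 1 / 2) (x y : X) (m : ℕ) :
    p (T^[m] x) (T y) ≤ k ^ m * p x (T y) + p y (T y) := by
  induction m with
  | zero => simpa using hp_nonneg y (T y)
  | succ m ih =>
    have hy : 2 * k * p y (T y) ≤ p y (T y) :=
      mul_le_of_le_one_left (hp_nonneg y (T y)) (by linarith)
    calc p (T^[m + 1] x) (T y)
        = p (T (T^[m] x)) (T y) := by rw [Function.iterate_succ_apply']
      _ ≤ k * (p (T^[m] x) (T y) + p y (T y)) := hT _ _
      _ ≤ k * (k ^ m * p x (T y) + p y (T y) + p y (T y)) := by gcongr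
      _ = k ^ (m + 1) * p x (T y) + 2 * k * p y (T y) := by ring
      _ ≤ k ^ (m + 1) * p x (T y) + p y (T y) := by gcongr

theorem apply_apply_le (hT : ModifiedKannanWith k p T) (hp_nonneg : ∀ x y, 0 ≤ p x y)
    (hp_symm : ∀ x y, p x y = p y x) (hk0 : 0 ≤ k) (hk : k ≤ 1 / 2) (x : X) :
    p (T x) (T (T x)) ≤ 2 * k * p x (T x) := by
  have hself : p (T x) (T x) ≤ p x (T x) :=
    (hT.apply_self_le x).trans (mul_le_of_le_one_left (hp_nonneg x (T x)) (by linarith))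
  calc p (T x) (T (T x))
      = p (T (T x)) (T x) := hp_symm _ _
    _ ≤ k * (p (T x) (T x) + p x (T x)) := hT _ _
    _ ≤ k * (p x (T x) + p x (T x)) := by gcongr
    _ = 2 * k * p x (T x) := by ring

theorem iterate_succ_le_geom (hT : ModifiedKannanWith k p T) (hp_nonneg : ∀ x y, 0 ≤ p x y)
    (hp_symm : ∀ x y, p x y = p y x) (hk0 : 0 ≤ k) (hk : k ≤ 1 / 2) (x : X) (n : ℕ) :
    p (T^[n] x) (T^[n + 1] x) ≤ (2 * k) ^ n * p x (T x) := by
  refine le_geom (u := fun n ↦ p (T^[n] x) (T^[n + 1] x)) (by positivity) n fun i _ ↦ ?_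
  simpa only [Function.iterate_succ_apply'] using
    hT.apply_apply_le hp_nonneg hp_symm hk0 hk (T^[i] x)

theorem apply_iterate_succ_le (hT : ModifiedKannanWith k p T) (hp_nonneg : ∀ x y, 0 ≤ p x y)
    (hp_symm : ∀ x y, p x y = p y x) (hk0 : 0 ≤ k) (hk : k ≤ 1 / 2) (x : X) (n : ℕ) :
    p (T x) (T^[n + 1] x) ≤ 2 * p x (T x) := by
  have hself : k ^ n * p (T x) (T x) ≤ p (T x) (T x) :=
    mul_le_of_le_one_left (hp_nonneg _ _) (pow_le_one₀ hk0 (by linarith))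
  have hx : 2 * k * p x (T x) ≤ p x (T x) :=
    mul_le_of_le_one_left (hp_nonneg x (T x)) (by linarith)
  calc p (T x) (T^[n + 1] x)
      = p (T^[n] (T x)) (T x) := hp_symm _ _
    _ ≤ k ^ n * p (T x) (T x) + p x (T x) := hT.iterate_apply_le hp_nonneg hk0 hk _ _ n
    _ ≤ 2 * p x (T x) := by linarith [hT.apply_self_le x]

theorem iterate_succ_iterate_succ_le (hT : ModifiedKannanWith k p T)
    (hp_nonneg : ∀ x y, 0 ≤ p x y) (hp_symm : ∀ x y, p x y = p y x)
    (hk0 : 0 ≤ k) (hk : k ≤ 1 / 2) (x : X) (m n : ℕ) :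
    p (T^[m + 1] x) (T^[n + 1] x) ≤ k ^ m * (2 * p x (T x)) + (2 * k) ^ n * p x (T x) :=
  calc p (T^[m + 1] x) (T^[n + 1] x)
      ≤ k ^ m * p (T x) (T^[n + 1] x) + p (T^[n] x) (T^[n + 1] x) := by
        rw [Function.iterate_succ_apply' T n]
        exact hT.iterate_apply_le hp_nonneg hk0 hk (T x) (T^[n] x) m
    _ ≤ k ^ m * (2 * p x (T x)) + (2 * k) ^ n * p x (T x) := by
        gcongr
        · exact hT.apply_iterate_succ_le hp_nonneg hp_symm hk0 hk x n
        · exact hT.iterate_succ_le_geom hp_nonneg hp_symm hk0 hk x n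

end ModifiedKannanWith

theorem pebms_modified_kannan_orbit_zero_cauchy_general
    {X : Type*} {p : X → X → ℝ} {T : X → X} {k : ℝ}
    (hp_nonneg : ∀ x y, 0 ≤ p x y) (hp_symm : ∀ x y, p x y = p y x)
    (hk0 : 0 ≤ k) (hk1 : k < 1 / 2) (hT : ModifiedKannanWith k p T) (x₀ : X) :
    Tendsto (fun nm : ℕ × ℕ ↦ p (T^[nm.1] x₀) (T^[nm.2] x₀)) atTop (𝓝 0) := by
  rw [← prod_atTop_atTop_eq, ← map_add_atTop_eq_nat 1, prod_map_map_eq, tendsto_map'_iff]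
  have hfst : Tendsto (fun nm : ℕ × ℕ ↦ k ^ nm.1) (atTop ×ˢ atTop) (𝓝 0) :=
    (tendsto_pow_atTop_nhds_zero_of_lt_one hk0 (by linarith)).comp tendsto_fst
  have hsnd : Tendsto (fun nm : ℕ × ℕ ↦ (2 * k) ^ nm.2) (atTop ×ˢ atTop) (𝓝 0) :=
    (tendsto_pow_atTop_nhds_zero_of_lt_one (by positivity) (by linarith)).comp tendsto_snd
  refine squeeze_zero (fun _ ↦ hp_nonneg _ _)
    (fun nm ↦ hT.iterate_succ_iterate_succ_le hp_nonneg hp_symm hk0 hk1.le x₀ nm.1 nm.2) ?_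
  simpa using (hfst.mul_const (2 * p x₀ (T x₀))).add (hsnd.mul_const (p x₀ (T x₀)))

/-- In a partial extended b-metric space, if `T` satisfies
`p(Tx,Ty) ≤ k[p(x,Ty) + p(y,Ty)]` with `k ∈ [0,1/2)` and
`n·p(Tⁿx₀,Tⁿx₀) → 0`, then the orbit of `x₀` is a 0-Cauchy sequence. -/
theorem pebms_modified_kannan_orbit_zero_cauchy
    {X : Type*}
    (p : X → X → ℝ) (θ : X → X → ℝ)
    (hθ : ∀ x y, 1 ≤ θ x y)
    (hp_nonneg : ∀ x y, 0 ≤ p x y)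
    (hP1 : ∀ x y, (p x x = p x y ∧ p x y = p y y) ↔ x = y)
    (hP2 : ∀ x y, p x x ≤ p x y)
    (hP3 : ∀ x y, p x y = p y x)
    (hP4 : ∀ x y z, p x z ≤ θ x z * (p x y + p y z) - p y y)
    (T : X → X) (k : ℝ) (hk0 : 0 ≤ k) (hk1 : k < 1/2)
    (hT : ∀ x y, p (T x) (T y) ≤ k * (p x (T y) + p y (T y)))
    (x₀ : X)
    (hx₀ : Tendsto (fun n : ℕ => (n : ℝ) * p (T^[n] x₀) (T^[n] x₀)) atTop (𝓝 0)) :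
    Tendsto (fun nm : ℕ × ℕ => p (T^[nm.1] x₀) (T^[nm.2] x₀)) atTop (𝓝 0) :=
  pebms_modified_kannan_orbit_zero_cauchy_general hp_nonneg hP3 hk0 hk1 hT x₀
end

section
/- Let (X, d, θ) be a complete extended b-metric space such that d is sequentially continuous, and let T : X → X satisfy d(Tx, Ty) ≤ k·d(x,y) for all x,y ∈ X, where k ∈ [0,1). Suppose that for each x₀ ∈ X, writing xₙ = Tⁿx₀, one has lim sup_{n,m→∞} θ(xₙ, xₘ) < 1/k (i.e., there is c with k·c < 1 such that θ(xₙ, xₘ) ≤ c for all sufficiently large n, m). Then T has exactly one fixed point u ∈ X, and for each y ∈ X, d(Tⁿy, u) → 0 as n → ∞. -/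
/-!
Write `xₙ = T^[n] z`. If `θ z xₙ ≤ c` for all `n`, the triangle inequality through `xₚ` gives
`d z xₙ₊ₚ ≤ c * k ^ p * d z xₙ + c * d z xₚ`. Choosing `p` with `c * k ^ p < 1` shows that the
orbit of `z` is bounded, and a contraction makes a bounded orbit Cauchy. In the triangle inequality
`d (T u) u ≤ θ (T u) u * (d (T u) xₙ₊₁ + d xₙ₊₁ u)` at a limit `u` of the orbit, the factor
`θ (T u) u` does not depend on `n`, so `u` is fixed.
-/

open Filter Topology

theorem bddAbove_range_of_add_le_mul_add {a : ℕ → ℝ} {q b : ℝ} {p : ℕ} (hq0 : 0 ≤ q) (hq1 : q < 1)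
    (hp : 0 < p) (ha : ∀ n, a (n + p) ≤ q * a n + b) : BddAbove (Set.range a) := by
  obtain ⟨M, hM⟩ := ((Set.finite_Iio p).image a).bddAbove
  -- `b / (1 - q)` is the fixed point of `t ↦ q * t + b`, which maps every larger `t` below itself.
  set B := max M (b / (1 - q))
  have hB : q * B + b ≤ B := by
    have : b ≤ B * (1 - q) := (div_le_iff₀ (sub_pos.2 hq1)).1 (le_max_right _ _)
    linarith
  refine ⟨B, Set.forall_mem_range.2 fun n => ?_⟩
  induction n using Nat.strong_induction_on with
  | _ n ih =>
    rcases lt_or_ge n p with hn | hn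
    · exact (hM (Set.mem_image_of_mem a hn)).trans (le_max_left _ _)
    · obtain ⟨m, rfl⟩ := Nat.exists_eq_add_of_le' hn
      calc a (m + p) ≤ q * a m + b := ha m
        _ ≤ q * B + b := by gcongr; exact ih m (Nat.lt_add_of_pos_right hp)
        _ ≤ B := hB

section Contraction

variable {X : Type*} {d θ : X → X → ℝ} {T : X → X} {k : ℝ}

theorem dist_iterate_le_pow_mul (hk0 : 0 ≤ k) (hT : ∀ x y, d (T x) (T y) ≤ k * d x y)
    (n : ℕ) (x y : X) : d (T^[n] x) (T^[n] y) ≤ k ^ n * d x y := by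
  induction n with
  | zero => simp
  | succ n ih =>
    rw [Function.iterate_succ_apply', Function.iterate_succ_apply', pow_succ', mul_assoc]
    exact (hT _ _).trans (mul_le_mul_of_nonneg_left ih hk0)

theorem bddAbove_dist_iterate (hd_nonneg : ∀ x y, 0 ≤ d x y)
    (hd_tri : ∀ x y z, d x z ≤ θ x z * (d x y + d y z)) (hk0 : 0 ≤ k) (hk1 : k < 1)
    (hT : ∀ x y, d (T x) (T y) ≤ k * d x y) {z : X}
    (hθ : BddAbove (Set.range fun n => θ z (T^[n] z))) :
    BddAbove (Set.range fun n => d z (T^[n] z)) := by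
  obtain ⟨c, hc0, hc⟩ : ∃ c, 0 ≤ c ∧ ∀ n, θ z (T^[n] z) ≤ c := by
    obtain ⟨c, hc0, hc⟩ := hθ.exists_ge 0
    exact ⟨c, hc0, Set.forall_mem_range.1 hc⟩
  obtain ⟨p, hcp, hp⟩ : ∃ p, c * k ^ p < 1 ∧ 0 < p := by
    have hlim : Tendsto (fun p => c * k ^ p) atTop (𝓝 0) := by
      simpa only [mul_zero] using (tendsto_pow_atTop_nhds_zero_of_lt_one hk0 hk1).const_mul c
    exact ((hlim.eventually_lt_const one_pos).and (eventually_gt_atTop 0)).exists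
  refine bddAbove_range_of_add_le_mul_add (b := c * d z (T^[p] z))
    (mul_nonneg hc0 (pow_nonneg hk0 p)) hcp hp fun n => ?_
  have hshift : d (T^[p] z) (T^[n + p] z) ≤ k ^ p * d z (T^[n] z) := by
    rw [add_comm, Function.iterate_add_apply]
    exact dist_iterate_le_pow_mul hk0 hT p z (T^[n] z)
  calc d z (T^[n + p] z)
      ≤ θ z (T^[n + p] z) * (d z (T^[p] z) + d (T^[p] z) (T^[n + p] z)) := hd_tri _ _ _
    _ ≤ c * (d z (T^[p] z) + d (T^[p] z) (T^[n + p] z)) :=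
        mul_le_mul_of_nonneg_right (hc _) (add_nonneg (hd_nonneg _ _) (hd_nonneg _ _))
    _ ≤ c * (d z (T^[p] z) + k ^ p * d z (T^[n] z)) := by gcongr
    _ = c * k ^ p * d z (T^[n] z) + c * d z (T^[p] z) := by ring

theorem tendsto_dist_iterate_iterate (hd_nonneg : ∀ x y, 0 ≤ d x y)
    (hd_symm : ∀ x y, d x y = d y x) (hk0 : 0 ≤ k) (hk1 : k < 1)
    (hT : ∀ x y, d (T x) (T y) ≤ k * d x y) {z : X}
    (hbdd : BddAbove (Set.range fun n => d z (T^[n] z))) :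
    Tendsto (fun nm : ℕ × ℕ => d (T^[nm.1] z) (T^[nm.2] z)) atTop (𝓝 0) := by
  obtain ⟨B, hB⟩ := hbdd
  have hle : ∀ n m, n ≤ m → d (T^[n] z) (T^[m] z) ≤ k ^ n * B := fun n m hnm => by
    obtain ⟨p, rfl⟩ := Nat.exists_eq_add_of_le hnm
    rw [Function.iterate_add_apply]
    exact (dist_iterate_le_pow_mul hk0 hT n _ _).trans
      (mul_le_mul_of_nonneg_left (hB (Set.mem_range_self p)) (pow_nonneg hk0 n))
  have hmin : Tendsto (fun nm : ℕ × ℕ => min nm.1 nm.2) atTop atTop :=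
    tendsto_atTop.2 fun N => (eventually_ge_atTop (N, N)).mono fun _ h => le_min h.1 h.2
  have hlim : Tendsto (fun nm : ℕ × ℕ => k ^ min nm.1 nm.2 * B) atTop (𝓝 0) := by
    simpa only [zero_mul, Function.comp_def] using
      ((tendsto_pow_atTop_nhds_zero_of_lt_one hk0 hk1).comp hmin).mul_const B
  refine squeeze_zero (fun _ => hd_nonneg _ _) (fun ⟨n, m⟩ => ?_) hlim
  rcases le_total n m with h | h
  · simpa only [min_eq_left h] using hle n m h
  · simpa only [min_eq_right h, hd_symm] using hle m n h

theorem isFixedPt_of_tendsto_dist_iterate (hd_nonneg : ∀ x y, 0 ≤ d x y)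
    (hd_eq : ∀ x y, d x y = 0 → x = y) (hd_symm : ∀ x y, d x y = d y x)
    (hd_tri : ∀ x y z, d x z ≤ θ x z * (d x y + d y z))
    (hT : ∀ x y, d (T x) (T y) ≤ k * d x y) {z u : X}
    (hu : Tendsto (fun n => d (T^[n] z) u) atTop (𝓝 0)) : Function.IsFixedPt T u := by
  have hTu : Tendsto (fun n => d (T u) (T^[n + 1] z)) atTop (𝓝 0) := by
    refine squeeze_zero (g := fun n => k * d (T^[n] z) u) (fun _ => hd_nonneg _ _) (fun n => ?_)
      (by simpa only [mul_zero] using hu.const_mul k)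
    rw [hd_symm, Function.iterate_succ_apply']
    exact hT _ _
  have hlim : Tendsto (fun n => θ (T u) u * (d (T u) (T^[n + 1] z) + d (T^[n + 1] z) u))
      atTop (𝓝 0) := by
    simpa only [add_zero, mul_zero] using
      (hTu.add ((tendsto_add_atTop_iff_nat 1).2 hu)).const_mul (θ (T u) u)
  exact hd_eq _ _ ((ge_of_tendsto' hlim fun _ => hd_tri _ _ _).antisymm (hd_nonneg _ _))

theorem tendsto_dist_iterate_of_isFixedPt (hd_nonneg : ∀ x y, 0 ≤ d x y) (hk0 : 0 ≤ k)
    (hk1 : k < 1) (hT : ∀ x y, d (T x) (T y) ≤ k * d x y) {u : X} (hu : Function.IsFixedPt T u)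
    (y : X) : Tendsto (fun n => d (T^[n] y) u) atTop (𝓝 0) := by
  refine squeeze_zero (g := fun n => k ^ n * d y u) (fun _ => hd_nonneg _ _) (fun n => ?_)
    (by simpa only [zero_mul] using
      (tendsto_pow_atTop_nhds_zero_of_lt_one hk0 hk1).mul_const (d y u))
  simpa only [(hu.iterate n).eq] using dist_iterate_le_pow_mul hk0 hT n y u

end Contraction

theorem ebms_banach_fixed_point_general {X : Type*} (d θ : X → X → ℝ)
    (hd_nonneg : ∀ x y, 0 ≤ d x y)
    (hd_eq : ∀ x y, d x y = 0 → x = y)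
    (hd_symm : ∀ x y, d x y = d y x)
    (hd_tri : ∀ x y z, d x z ≤ θ x z * (d x y + d y z))
    (hcomplete : ∀ s : ℕ → X,
      Tendsto (fun nm : ℕ × ℕ => d (s nm.1) (s nm.2)) atTop (𝓝 0) →
      ∃ a : X, Tendsto (fun n => d (s n) a) atTop (𝓝 0))
    (T : X → X) (k : ℝ) (hk0 : 0 ≤ k) (hk1 : k < 1)
    (hT : ∀ x y, d (T x) (T y) ≤ k * d x y)
    (z : X) (hθ : BddAbove (Set.range fun n => θ z (T^[n] z))) :
    ∃ u : X, T u = u ∧ (∀ v : X, T v = v → v = u) ∧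
      ∀ y : X, Tendsto (fun n => d (T^[n] y) u) atTop (𝓝 0) := by
  have hbdd := bddAbove_dist_iterate hd_nonneg hd_tri hk0 hk1 hT hθ
  obtain ⟨u, hu⟩ := hcomplete (fun n => T^[n] z)
    (tendsto_dist_iterate_iterate hd_nonneg hd_symm hk0 hk1 hT hbdd)
  have hfix : T u = u := isFixedPt_of_tendsto_dist_iterate hd_nonneg hd_eq hd_symm hd_tri hT hu
  have hlim := tendsto_dist_iterate_of_isFixedPt hd_nonneg hk0 hk1 hT hfix
  refine ⟨u, hfix, fun v hv => hd_eq v u ?_, hlim⟩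
  simpa only [Function.iterate_fixed hv, tendsto_const_nhds_iff] using hlim v

/-- Banach-type fixed point theorem in a complete extended
b-metric space with sequentially continuous metric (Kamran et al.). -/
theorem ebms_banach_fixed_point
    {X : Type*} [Nonempty X]
    (d : X → X → ℝ) (θ : X → X → ℝ)
    (hθ : ∀ x y, 1 ≤ θ x y)
    (hd_nonneg : ∀ x y, 0 ≤ d x y)
    (hd_eq : ∀ x y, d x y = 0 ↔ x = y)
    (hd_symm : ∀ x y, d x y = d y x)
    (hd_tri : ∀ x y z, d x z ≤ θ x z * (d x y + d y z))
    (hd_cont : ∀ (x y : ℕ → X) (a b : X),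
      Tendsto (fun n => d (x n) a) atTop (𝓝 0) →
      Tendsto (fun n => d (y n) b) atTop (𝓝 0) →
      Tendsto (fun n => d (x n) (y n)) atTop (𝓝 (d a b)))
    (hcomplete : ∀ s : ℕ → X,
      Tendsto (fun nm : ℕ × ℕ => d (s nm.1) (s nm.2)) atTop (𝓝 0) →
      ∃ a : X, Tendsto (fun n => d (s n) a) atTop (𝓝 0))
    (T : X → X) (k : ℝ) (hk0 : 0 ≤ k) (hk1 : k < 1)
    (hT : ∀ x y, d (T x) (T y) ≤ k * d x y)
    (hθlim : ∀ x₀ : X, ∃ c : ℝ, k * c < 1 ∧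
      ∃ N : ℕ, ∀ n ≥ N, ∀ m ≥ N, θ (T^[n] x₀) (T^[m] x₀) ≤ c) :
    ∃ u : X, T u = u ∧ (∀ v : X, T v = v → v = u) ∧
      ∀ y : X, Tendsto (fun n => d (T^[n] y) u) atTop (𝓝 0) := by
  obtain ⟨x₀⟩ := ‹Nonempty X›
  obtain ⟨c, -, N, hc⟩ := hθlim x₀
  refine ebms_banach_fixed_point_general d θ hd_nonneg (fun x y => (hd_eq x y).1) hd_symm hd_tri
    hcomplete T k hk0 hk1 hT (T^[N] x₀) ⟨c, Set.forall_mem_range.2 fun n => ?_⟩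
  simpa only [Function.iterate_add_apply] using hc N le_rfl (n + N) (Nat.le_add_left N n)
end
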